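/- (Key step of Proposition 1) Fix vehicle length l > 0, uncertainty parameter σₒ > 0 and positive constants T, L, τ. Let 0 < v₁ < v₂ and let η₁, η_r > 0 satisfy p(v₂,η_r) = p(v₁,η₁). Then η_r < η₁ and the collision-inclusive capacity satisfies s(v₂,η_r) > s(v₁,η₁). -/

import Mathlib

open MeasureTheory Real Filter Set

/-- The standard Gaussian probability density function. -/
noncomputable def stdGaussianPDF (x : ℝ) : ℝ :=
  (Real.sqrt (2 * Real.pi))⁻¹ * Real.exp (-x ^ 2 / 2)

/-- The standard Gaussian cumulative distribution function Φ. -/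
noncomputable def stdGaussianCDF (x : ℝ) : ℝ :=
  ∫ t in Set.Iic x, stdGaussianPDF t

/-- The per-time-step collision probability p(v,η) = Φ((l − v·η)/(v·σₒ·√η)). -/
noncomputable def collisionProb (l σₒ v η : ℝ) : ℝ :=
  stdGaussianCDF ((l - v * η) / (v * σₒ * Real.sqrt η))

/-- The collision-inclusive capacity s(v,η) = 1/(η + (T·L)/(τ·v)·p(v,η)). -/
noncomputable def cic (l σₒ T L τ v η : ℝ) : ℝ :=
  1 / (η + (T * L) / (τ * v) * collisionProb l σₒ v η)

/-!
Dividing through by `v * √η` turns the argument of Φ into `(l / (v * √η) - √η) / σₒ`, so the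
collision probability strictly decreases in the speed and in the headway. A faster vehicle with
the same collision probability must therefore keep a shorter headway, and then both terms in the
denominator of the capacity have shrunk.
-/

theorem strictMono_setIntegral_Iic_of_pos {α : Type*} [LinearOrder α] [DenselyOrdered α]
    [TopologicalSpace α] [OrderClosedTopology α] [MeasurableSpace α] [OpensMeasurableSpace α]
    {μ : Measure α} [μ.IsOpenPosMeasure] {f : α → ℝ}
    (hf : ∀ x, IntegrableOn f (Iic x) μ) (hpos : ∀ x, 0 < f x) :
    StrictMono fun x => ∫ t in Iic x, f t ∂μ := by
  intro a b hab
  have hIoc : IntegrableOn f (Ioc a b) μ := (hf b).mono_set Ioc_subset_Iic_self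
  have hsplit : ∫ t in Iic b, f t ∂μ = ∫ t in Iic a, f t ∂μ + ∫ t in Ioc a b, f t ∂μ := by
    rw [← Iic_union_Ioc_eq_Iic hab.le,
      setIntegral_union (Iic_disjoint_Ioc le_rfl) measurableSet_Ioc (hf a) hIoc]
  have hsupport : Function.support f = univ :=
    Function.support_eq_univ fun x => (hpos x).ne'
  have hgain : 0 < ∫ t in Ioc a b, f t ∂μ := by
    rw [setIntegral_pos_iff_support_of_nonneg_ae (.of_forall fun t => (hpos t).le) hIoc,
      hsupport, univ_inter]
    have hIoo : 0 < μ (Ioo a b) := isOpen_Ioo.measure_pos μ (nonempty_Ioo.2 hab)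
    exact hIoo.trans_le (measure_mono Ioo_subset_Ioc_self)
  simpa only [hsplit] using lt_add_of_pos_right _ hgain

theorem stdGaussianPDF_eq_gaussianPDFReal :
    stdGaussianPDF = ProbabilityTheory.gaussianPDFReal 0 1 := by
  ext x
  simp [stdGaussianPDF, ProbabilityTheory.gaussianPDFReal]

theorem stdGaussianPDF_pos (x : ℝ) : 0 < stdGaussianPDF x :=
  stdGaussianPDF_eq_gaussianPDFReal ▸ ProbabilityTheory.gaussianPDFReal_pos 0 1 x one_ne_zero

theorem integrable_stdGaussianPDF : Integrable stdGaussianPDF :=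
  stdGaussianPDF_eq_gaussianPDFReal ▸ ProbabilityTheory.integrable_gaussianPDFReal 0 1

theorem stdGaussianCDF_strictMono : StrictMono stdGaussianCDF :=
  strictMono_setIntegral_Iic_of_pos (fun _ => integrable_stdGaussianPDF.integrableOn)
    stdGaussianPDF_pos

theorem stdGaussianCDF_nonneg (x : ℝ) : 0 ≤ stdGaussianCDF x :=
  integral_nonneg fun t => (stdGaussianPDF_pos t).le

section Collision

variable {l σₒ v v₁ v₂ η η₁ η₂ : ℝ}

theorem collisionProb_nonneg (l σₒ v η : ℝ) : 0 ≤ collisionProb l σₒ v η :=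
  stdGaussianCDF_nonneg _

theorem collisionProb_eq_stdGaussianCDF (l σₒ η : ℝ) (hv : v ≠ 0) :
    collisionProb l σₒ v η = stdGaussianCDF ((l / (v * √η) - √η) / σₒ) := by
  rw [collisionProb, mul_right_comm, ← div_div, sub_div, mul_div_mul_left _ _ hv, div_sqrt]

theorem collisionProb_strictAntiOn_speed (hl : 0 < l) (hσ : 0 < σₒ) (hη : 0 < η) :
    StrictAntiOn (fun v => collisionProb l σₒ v η) (Ioi 0) := by
  intro v₁ (hv₁ : 0 < v₁) v₂ (hv₂ : 0 < v₂) hv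
  simp only [collisionProb_eq_stdGaussianCDF l σₒ η hv₁.ne',
    collisionProb_eq_stdGaussianCDF l σₒ η hv₂.ne']
  apply stdGaussianCDF_strictMono
  gcongr

theorem collisionProb_strictAntiOn_headway (hl : 0 ≤ l) (hσ : 0 < σₒ) (hv : 0 < v) :
    StrictAntiOn (fun η => collisionProb l σₒ v η) (Ioi 0) := by
  intro η₁ (hη₁ : 0 < η₁) η₂ _ hη
  simp only [collisionProb_eq_stdGaussianCDF l σₒ _ hv.ne']
  apply stdGaussianCDF_strictMono
  have hsqrt : √η₁ < √η₂ := sqrt_lt_sqrt hη₁.le hη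
  have hratio : l / (v * √η₂) ≤ l / (v * √η₁) := by gcongr
  gcongr ?_ / σₒ
  linarith

theorem headway_lt_of_collisionProb_le (hl : 0 < l) (hσ : 0 < σₒ) (hv₁ : 0 < v₁) (hv : v₁ < v₂)
    (hη₁ : 0 < η₁) (hp : collisionProb l σₒ v₁ η₁ ≤ collisionProb l σₒ v₂ η₂) : η₂ < η₁ := by
  have hv₂ : 0 < v₂ := hv₁.trans hv
  by_contra! hη
  refine hp.not_gt ?_
  calc collisionProb l σₒ v₂ η₂
      ≤ collisionProb l σₒ v₂ η₁ :=
        (collisionProb_strictAntiOn_headway hl.le hσ hv₂).antitoneOn hη₁ (hη₁.trans_le hη) hη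
    _ < collisionProb l σₒ v₁ η₁ := collisionProb_strictAntiOn_speed hl hσ hη₁ hv₁ hv₂ hv

theorem cic_lt_cic_of_collisionProb_le {T L τ : ℝ} (hT : 0 ≤ T) (hL : 0 ≤ L) (hτ : 0 < τ)
    (hv₁ : 0 < v₁) (hv : v₁ ≤ v₂) (hη₂ : 0 < η₂) (hη : η₂ < η₁)
    (hp : collisionProb l σₒ v₂ η₂ ≤ collisionProb l σₒ v₁ η₁) :
    cic l σₒ T L τ v₁ η₁ < cic l σₒ T L τ v₂ η₂ := by
  have hv₂ : 0 < v₂ := hv₁.trans_le hv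
  have hp₂ : 0 ≤ collisionProb l σₒ v₂ η₂ := collisionProb_nonneg l σₒ v₂ η₂
  have hcost : T * L / (τ * v₂) * collisionProb l σₒ v₂ η₂
      ≤ T * L / (τ * v₁) * collisionProb l σₒ v₁ η₁ := by gcongr
  exact one_div_lt_one_div_of_lt (by positivity) (add_lt_add_of_lt_of_le hη hcost)

end Collision

/-- key step of Proposition 1: if 0 < v₁ < v₂ and η₁, ηr > 0
satisfy p(v₂,ηr) = p(v₁,η₁), then ηr < η₁ and s(v₂,ηr) > s(v₁,η₁). -/
theorem cic_increases_along_level_set (l σₒ T L τ v₁ v₂ η₁ ηr : ℝ)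
    (hl : 0 < l) (hσ : 0 < σₒ) (hT : 0 < T) (hL : 0 < L) (hτ : 0 < τ)
    (hv₁ : 0 < v₁) (hv : v₁ < v₂) (hη₁ : 0 < η₁) (hηr : 0 < ηr)
    (hlevel : collisionProb l σₒ v₂ ηr = collisionProb l σₒ v₁ η₁) :
    ηr < η₁ ∧ cic l σₒ T L τ v₁ η₁ < cic l σₒ T L τ v₂ ηr := by
  have hη : ηr < η₁ := headway_lt_of_collisionProb_le hl hσ hv₁ hv hη₁ hlevel.ge
  exact ⟨hη, cic_lt_cic_of_collisionProb_le hT.le hL.le hτ hv₁ hv.le hηr hη hlevel.le⟩
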